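/- arXiv:1301.0138 — 2 statements merged into one kernel-verified Lean document; each statement's English description precedes it below -/
import Mathlib

section
/- For every integer m ≥ 1, the identity X_m(x,y) = −S_m(y) + S_{m−2}(y) − x²·(S_{m−1}(y) + 2·∑_{i=0}^{m−2} S_i(y)) holds in ℂ[x,y]. -/
open Polynomial

/-- The Chebyshev-like polynomials `S n ∈ R[X]` defined by `S 0 = 1`, `S 1 = X` and
`S (n+1) = X * S n - S (n-1)` for all `n : ℤ`. -/
noncomputable def S (R : Type*) [CommRing R] : ℤ → R[X]
  | 0 => 1
  | 1 => X
  | (n : ℕ) + 2 => X * S R (n + 1) - S R n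
  | -((n : ℕ) + 1) => X * S R (-n) - S R (-n + 1)
  termination_by n => Int.natAbs n + Int.natAbs (n - 1)

/-- The variable `x` of `ℂ[x,y]`, realized as `MvPolynomial (Fin 2) ℂ`. -/
noncomputable def xP : MvPolynomial (Fin 2) ℂ := MvPolynomial.X 0

/-- The variable `y` of `ℂ[x,y]`. -/
noncomputable def yP : MvPolynomial (Fin 2) ℂ := MvPolynomial.X 1

/-- The polynomials `X_m ∈ ℂ[x,y]` defined by `X_0 = -2`, `X_1 = -x^2 - y` and
`X_{m+1} = y * X_m - X_{m-1} - 2x^2` for all `m : ℤ`. -/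
noncomputable def Xp : ℤ → MvPolynomial (Fin 2) ℂ
  | 0 => -2
  | 1 => -(MvPolynomial.X 0) ^ 2 - MvPolynomial.X 1
  | (m : ℕ) + 2 => MvPolynomial.X 1 * Xp (m + 1) - Xp m - 2 * (MvPolynomial.X 0) ^ 2
  | -((m : ℕ) + 1) => MvPolynomial.X 1 * Xp (-m) - Xp (-m + 1) - 2 * (MvPolynomial.X 0) ^ 2
  termination_by m => Int.natAbs m + Int.natAbs (m - 1)

/-!
The sequence `X_m` solves the inhomogeneous recurrence `f (n + 2) = y * f (n + 1) - f n + c` with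
`c = -2 * x ^ 2`. The homogeneous solutions are the combinations of `S_n(y)` and `S_{n-1}(y)`, and
the partial sums `∑ i < n, S_i(y)` solve the recurrence for `c = 1`, so every solution is
`f (n + 1) = f 1 * S_n(y) - f 0 * S_{n-1}(y) + c * ∑ i < n, S_i(y)`. Inserting `X_0 = -2` and
`X_1 = -x ^ 2 - y` and absorbing `y * S_n(y) - S_{n-1}(y) = S_{n+1}(y)` gives the formula.
-/

section ChebyshevS

variable (R : Type*) [CommRing R]

theorem S_eq_chebyshev_S (n : ℤ) : S R n = Chebyshev.S R n := by
  induction n using S.induct with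
  | case1 => rw [S, Chebyshev.S]
  | case2 => rw [S, Chebyshev.S]
  | case3 n ih₁ ih₀ => rw [S, Chebyshev.S, ih₁, ih₀]
  | case4 n ih₀ ih₁ => rw [S, Chebyshev.S, ih₀, ih₁]

theorem sum_range_chebyshev_S_add_two (n : ℕ) :
    ∑ i ∈ Finset.range (n + 2), Chebyshev.S R i
      = X * ∑ i ∈ Finset.range (n + 1), Chebyshev.S R i
        - ∑ i ∈ Finset.range n, Chebyshev.S R i + 1 := by
  have sum_pred : ∑ i ∈ Finset.range (n + 1), Chebyshev.S R ((i : ℤ) - 1)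
      = ∑ i ∈ Finset.range n, Chebyshev.S R i := by
    simp [Finset.sum_range_succ']
  calc ∑ i ∈ Finset.range (n + 2), Chebyshev.S R i
      = ∑ i ∈ Finset.range (n + 1), Chebyshev.S R ((i : ℤ) + 1) + 1 := by
        simp [Finset.sum_range_succ' _ (n + 1)]
    _ = ∑ i ∈ Finset.range (n + 1),
          (X * Chebyshev.S R i - Chebyshev.S R ((i : ℤ) - 1)) + 1 := by
        simp only [Chebyshev.S_add_one]
    _ = _ := by rw [Finset.sum_sub_distrib, ← Finset.mul_sum, sum_pred]

variable {R}

theorem eq_eval_chebyshev_S_of_recurrence {f : ℕ → R} {a c : R}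
    (hf : ∀ n, f (n + 2) = a * f (n + 1) - f n + c) (n : ℕ) :
    f (n + 1) = f 1 * (Chebyshev.S R n).eval a - f 0 * (Chebyshev.S R (n - 1)).eval a
      + c * ∑ i ∈ Finset.range n, (Chebyshev.S R i).eval a := by
  induction n using Nat.twoStepInduction with
  | zero => simp
  | one => simp [hf 0, mul_comm a]
  | more n ih₀ ih₁ =>
    have hS₂ := congrArg (eval a) (Chebyshev.S_add_two R n)
    have hS₁ := congrArg (eval a) (Chebyshev.S_add_one R n)
    have hsum := congrArg (eval a) (sum_range_chebyshev_S_add_two R n)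
    simp only [eval_add, eval_sub, eval_mul, eval_X, eval_one, eval_finsetSum] at hS₂ hS₁ hsum
    push_cast at ih₁ ⊢
    rw [add_sub_cancel_right] at ih₁
    rw [show (n : ℤ) + 2 - 1 = n + 1 by ring]
    linear_combination hf (n + 1) + a * ih₁ - ih₀ - f 1 * hS₂ + f 0 * hS₁ - c * hsum

end ChebyshevS

theorem Xp_zero : Xp 0 = -2 := by rw [Xp]

theorem Xp_one : Xp 1 = -xP ^ 2 - yP := by rw [Xp, xP, yP]

theorem Xp_add_two (n : ℕ) :
    Xp ((n : ℤ) + 2) = yP * Xp ((n : ℤ) + 1) - Xp n - 2 * xP ^ 2 :=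
  Xp.eq_3 n

/-- General term of `X_m` for `m ≥ 1`:
`X_m = -S_m(y) + S_{m-2}(y) - x^2 * (S_{m-1}(y) + 2 * ∑_{i=0}^{m-2} S_i(y))`. -/
theorem Xp_general_term (m : ℕ) (hm : 1 ≤ m) :
    Xp (m : ℤ) = -(aeval yP (S ℂ (m : ℤ))) + aeval yP (S ℂ ((m : ℤ) - 2))
      - xP ^ 2 * (aeval yP (S ℂ ((m : ℤ) - 1))
        + 2 * ∑ i ∈ Finset.range (m - 1), aeval yP (S ℂ (i : ℤ))) := by
  obtain ⟨n, rfl⟩ := Nat.exists_eq_add_of_le' hm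
  have recurrence (k : ℕ) :
      Xp (k + 2 : ℕ) = yP * Xp (k + 1 : ℕ) - Xp k + -2 * xP ^ 2 := by
    push_cast
    linear_combination Xp_add_two k
  have solution := eq_eval_chebyshev_S_of_recurrence (f := fun k : ℕ ↦ Xp k) recurrence n
  have hS := congrArg (eval yP) (Chebyshev.S_add_one (MvPolynomial (Fin 2) ℂ) n)
  simp only [eval_sub, eval_mul, eval_X] at hS
  simp only [S_eq_chebyshev_S, Chebyshev.aeval_S]
  push_cast [Xp_zero, Xp_one] at solution ⊢
  rw [show (n : ℤ) + 1 - 2 = n - 1 by ring, solution, hS]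
  simp only [add_sub_cancel_right]
  ring
end

section
/- Let f, g ∈ ℂ[z] be nonzero polynomials that are relatively prime and such that deg f − deg g is an odd integer. Then the polynomial Φ(x,z) = f(z) + x²·g(z) is irreducible in ℂ[x,z]. -/
open Polynomial

/-- The variable `z` of `ℂ[x,z]`. -/
noncomputable def zP : MvPolynomial (Fin 2) ℂ := MvPolynomial.X 1

/-!
View `Φ = g x² + f` as a quadratic in `x` over `ℂ[z]`. It is primitive because `f` and `g` are
relatively prime, so a nontrivial factorization has the form `(a₁ x + a₀) (b₁ x + b₀)`. The
vanishing of the coefficient `a₁ b₀ + a₀ b₁` of `x` then gives `-f g = (a₁ b₀)²`, and a square has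
even degree.
-/

lemma isPrimitive_C_mul_X_pow_add_C {R : Type*} [CommSemiring R] {a b : R} (hab : IsRelPrime a b)
    {n : ℕ} (hn : n ≠ 0) : (C a * X ^ n + C b).IsPrimitive := by
  intro c hc
  rw [C_dvd_iff_dvd_coeff] at hc
  have ha : c ∣ a := by simpa [coeff_C, hn] using hc n
  have hb : c ∣ b := by simpa [hn.symm] using hc 0
  exact hab ha hb

lemma isUnit_of_isPrimitive_of_dvd_of_natDegree_eq_zero {R : Type*} [CommSemiring R] {p q : R[X]}
    (hp : p.IsPrimitive) (hq : q ∣ p) (hdeg : q.natDegree = 0) : IsUnit q := by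
  obtain ⟨c, rfl⟩ := natDegree_eq_zero.1 hdeg
  exact (hp c hq).map C

lemma irreducible_of_isPrimitive_of_natDegree_eq_two {R : Type*} [CommSemiring R] [NoZeroDivisors R]
    {p : R[X]} (hp : p.IsPrimitive) (hdeg : p.natDegree = 2)
    (hlin : ∀ a₁ a₀ b₁ b₀ : R, p ≠ (C a₁ * X + C a₀) * (C b₁ * X + C b₀)) : Irreducible p where
  not_isUnit hunit := two_ne_zero (hdeg.symm.trans (natDegree_eq_zero_of_isUnit hunit))
  isUnit_or_isUnit a b hab := by
    by_contra! hunits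
    have ha : a.natDegree ≠ 0 :=
      mt (isUnit_of_isPrimitive_of_dvd_of_natDegree_eq_zero hp ⟨b, hab⟩) hunits.1
    have hb : b.natDegree ≠ 0 :=
      mt (isUnit_of_isPrimitive_of_dvd_of_natDegree_eq_zero hp (hab ▸ dvd_mul_left b a)) hunits.2
    have hsum : a.natDegree + b.natDegree = 2 := by
      rw [← natDegree_mul (ne_zero_of_natDegree_gt (Nat.pos_of_ne_zero ha))
        (ne_zero_of_natDegree_gt (Nat.pos_of_ne_zero hb)), ← hab, hdeg]
    obtain ⟨a₁, a₀, rfl⟩ := exists_eq_X_add_C_of_natDegree_le_one (p := a) (by lia)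
    obtain ⟨b₁, b₀, rfl⟩ := exists_eq_X_add_C_of_natDegree_le_one (p := b) (by lia)
    exact hlin a₁ a₀ b₁ b₀ hab

lemma isSquare_neg_mul_of_C_mul_X_sq_add_C_eq_mul {R : Type*} [CommRing R] {a b a₁ a₀ b₁ b₀ : R}
    (h : C a * X ^ 2 + C b = (C a₁ * X + C a₀) * (C b₁ * X + C b₀)) : IsSquare (-(a * b)) := by
  have hexpand : (C a₁ * X + C a₀) * (C b₁ * X + C b₀) =
      C (a₁ * b₁) * X ^ 2 + C (a₁ * b₀ + a₀ * b₁) * X + C (a₀ * b₀) := by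
    simp only [C_mul, C_add]; ring
  rw [hexpand] at h
  have h₂ : a = a₁ * b₁ := by simpa [-map_mul, coeff_X, coeff_C] using congr(coeff $h 2)
  have h₁ : 0 = a₁ * b₀ + a₀ * b₁ := by simpa [-map_mul, coeff_X, coeff_C] using congr(coeff $h 1)
  have h₀ : b = a₀ * b₀ := by simpa using congr(coeff $h 0)
  refine ⟨a₁ * b₀, ?_⟩
  rw [h₂, h₀]
  linear_combination (a₁ * b₀) * h₁

lemma irreducible_C_mul_X_sq_add_C {R : Type*} [CommRing R] [NoZeroDivisors R] {a b : R}
    (hab : IsRelPrime a b) (hsq : ¬IsSquare (-(a * b))) : Irreducible (C a * X ^ 2 + C b) := by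
  have ha : a ≠ 0 := by
    rintro rfl
    simp at hsq
  have hdeg : (C a * X ^ 2 + C b).natDegree = 2 := by compute_degree!
  exact irreducible_of_isPrimitive_of_natDegree_eq_two
    (isPrimitive_C_mul_X_pow_add_C hab two_ne_zero) hdeg
    fun _ _ _ _ h => hsq (isSquare_neg_mul_of_C_mul_X_sq_add_C_eq_mul h)

lemma even_natDegree_of_isSquare {R : Type*} [Semiring R] [NoZeroDivisors R] {p : R[X]}
    (hp : IsSquare p) : Even p.natDegree := by
  obtain ⟨q, rfl⟩ := hp
  rw [← sq, natDegree_pow]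
  exact even_two_mul _

lemma ne_zero_of_isRelPrime_of_odd_natDegree_add {R : Type*} [CommSemiring R] [NoZeroDivisors R]
    {f g : R[X]} (hfg : IsRelPrime f g) (hodd : Odd (f.natDegree + g.natDegree)) : f ≠ 0 := by
  rintro rfl
  have hg : g.natDegree = 0 := natDegree_eq_zero_of_isUnit (isRelPrime_zero_left.1 hfg)
  simp [hg] at hodd

lemma not_isSquare_neg_mul_of_odd_natDegree_add {R : Type*} [CommRing R] [NoZeroDivisors R]
    {f g : R[X]} (hfg : IsRelPrime f g) (hodd : Odd (f.natDegree + g.natDegree)) :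
    ¬IsSquare (-(f * g)) := by
  have hf : f ≠ 0 := ne_zero_of_isRelPrime_of_odd_natDegree_add hfg hodd
  have hg : g ≠ 0 := ne_zero_of_isRelPrime_of_odd_natDegree_add hfg.symm (by rwa [add_comm])
  intro hsq
  have heven := even_natDegree_of_isSquare hsq
  rw [natDegree_neg, natDegree_mul hf hg] at heven
  exact Nat.not_even_iff_odd.2 hodd heven

lemma equivMvPolynomial_swap {R : Type*} [CommSemiring R] (p : R[X][X]) :
    Bivariate.equivMvPolynomial R (Bivariate.swap p) =
      aevalAeval (MvPolynomial.X 1) (MvPolynomial.X 0) p :=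
  Bivariate.aevalAeval_swap (MvPolynomial.X 0 : MvPolynomial (Fin 2) R) (MvPolynomial.X 1) p

theorem irreducible_of_coprime_odd_degree_general {R : Type*} [CommRing R] [NoZeroDivisors R]
    {f g : R[X]} (hfg : IsRelPrime f g) (hodd : Odd ((f.natDegree : ℤ) - (g.natDegree : ℤ))) :
    Irreducible (aeval (MvPolynomial.X 1) f + MvPolynomial.X 0 ^ 2 * aeval (MvPolynomial.X 1) g :
      MvPolynomial (Fin 2) R) := by
  have hodd_add : Odd (g.natDegree + f.natDegree) := by grind
  have hirr : Irreducible (C g * X ^ 2 + C f) := irreducible_C_mul_X_sq_add_C hfg.symm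
    (not_isSquare_neg_mul_of_odd_natDegree_add hfg.symm hodd_add)
  rw [← MulEquiv.irreducible_iff (Bivariate.swap.trans (Bivariate.equivMvPolynomial R)),
    AlgEquiv.trans_apply, equivMvPolynomial_swap] at hirr
  simpa only [map_add, map_mul, map_pow, aevalAeval_C, aevalAeval_Y, add_comm, mul_comm] using hirr

/-- If `f, g ∈ ℂ[z]` are nonzero, relatively prime, and `deg f - deg g` is odd, then
`Φ(x,z) = f(z) + x^2 g(z)` is irreducible in `ℂ[x,z]`. -/
theorem irreducible_of_coprime_odd_degree (f g : Polynomial ℂ) (hf : f ≠ 0) (hg : g ≠ 0)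
    (hcop : IsCoprime f g) (hodd : Odd ((f.natDegree : ℤ) - (g.natDegree : ℤ))) :
    Irreducible (aeval zP f + xP ^ 2 * aeval zP g) :=
  irreducible_of_coprime_odd_degree_general hcop.isRelPrime hodd
end
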